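/- Fix m ≥ 2 and a strictly ordered vector (z1, …, z_{m−1}) with z1 < … < z_{m−1}. Then the mutual information of the m-threshold quantizer obtained by appending a final threshold t converges, as t → ∞, to the mutual information of the (m−1)-threshold quantizer: lim_{t→∞} I_m(z1, …, z_{m−1}, t) = I_{m−1}(z1, …, z_{m−1}). -/

import Mathlib

/-!
A threshold `t > y` does not affect which side of the quantizer the point `y` falls on, so the
indicators of the odd unions for `(z, t)` converge pointwise as `t → ∞`. Dominated convergence,
with the norm of the density as the bound, gives convergence of `A11` and `A22`, and the mutual
information depends continuously on these two numbers because `x * log x` is continuous at `0`.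
-/

open MeasureTheory Real Set Filter

/-- Binary entropy function. -/
noncomputable def Hb (w : ℝ) : ℝ := -(w * Real.log w) - (1 - w) * Real.log (1 - w)

/-- The union of the odd-indexed pieces of the partition of ℝ induced by the
thresholds `h 0 < h 1 < ⋯ < h (n-1)`, i.e. `(-∞, h 0) ∪ [h 1, h 2) ∪ ⋯`:
a point `y` belongs to it iff the number of thresholds `≤ y` is even. -/
def oddUnion {n : ℕ} (h : Fin n → ℝ) : Set ℝ :=
  {y | Even (Finset.univ.filter (fun i => h i ≤ y)).card}

noncomputable def A11 (φ0 : ℝ → ℝ) {n : ℕ} (h : Fin n → ℝ) : ℝ := ∫ y in oddUnion h, φ0 y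

noncomputable def A22 (φ1 : ℝ → ℝ) {n : ℕ} (h : Fin n → ℝ) : ℝ := ∫ y in (oddUnion h)ᶜ, φ1 y

noncomputable def q0 (p0 p1 : ℝ) (φ0 φ1 : ℝ → ℝ) {n : ℕ} (h : Fin n → ℝ) : ℝ :=
  p0 * A11 φ0 h + p1 * (1 - A22 φ1 h)

/-- Mutual information of the quantizer with thresholding vector `h`. -/
noncomputable def MI (p0 p1 : ℝ) (φ0 φ1 : ℝ → ℝ) {n : ℕ} (h : Fin n → ℝ) : ℝ :=
  Hb (q0 p0 p1 φ0 φ1 h) - p0 * Hb (A11 φ0 h) - p1 * Hb (A22 φ1 h)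

theorem Hb_eq_binEntropy : Hb = binEntropy := by
  funext w
  simp only [Hb, binEntropy, log_inv]
  ring

theorem continuous_Hb : Continuous Hb :=
  Hb_eq_binEntropy ▸ binEntropy_continuous

section SetIntegral

variable {α ι E : Type*} [MeasurableSpace α] {μ : Measure α} [NormedAddCommGroup E]
  [NormedSpace ℝ E] {f : α → E} {l : Filter ι} [l.IsCountablyGenerated]

theorem tendsto_setIntegral_of_ae_eventually_mem_iff {s : ι → Set α} {t : Set α}
    (hf : Integrable f μ) (hs : ∀ i, MeasurableSet (s i)) (ht : MeasurableSet t)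
    (h : ∀ᵐ x ∂μ, ∀ᶠ i in l, x ∈ s i ↔ x ∈ t) :
    Tendsto (fun i => ∫ x in s i, f x ∂μ) l (nhds (∫ x in t, f x ∂μ)) := by
  simp_rw [← integral_indicator (hs _), ← integral_indicator ht]
  refine tendsto_integral_filter_of_dominated_convergence (fun x => ‖f x‖)
    (.of_forall fun i => hf.aestronglyMeasurable.indicator (hs i))
    (.of_forall fun i => ae_of_all _ fun x => norm_indicator_le_norm_self f x) hf.norm ?_
  filter_upwards [h] with x hx
  refine tendsto_const_nhds.congr' ?_
  filter_upwards [hx] with i hi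
  by_cases hxt : x ∈ t
  · rw [indicator_of_mem hxt, indicator_of_mem (hi.mpr hxt)]
  · rw [indicator_of_notMem hxt, indicator_of_notMem (mt hi.mp hxt)]

end SetIntegral

section OddUnion

variable {n : ℕ}

theorem measurableSet_oddUnion (h : Fin n → ℝ) : MeasurableSet (oddUnion h) := by
  have card_mono : Monotone fun y : ℝ => (Finset.univ.filter fun i => h i ≤ y).card :=
    fun _ _ hxy => Finset.card_le_card <|
      Finset.monotone_filter_right _ fun _ _ hi => hi.trans hxy
  exact card_mono.measurable (MeasurableSet.of_discrete (s := {k : ℕ | Even k}))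

theorem mem_oddUnion_snoc_iff_of_lt (z : Fin n → ℝ) {t y : ℝ} (hy : y < t) :
    y ∈ oddUnion (Fin.snoc z t : Fin (n + 1) → ℝ) ↔ y ∈ oddUnion z := by
  simp only [oddUnion, mem_ofPred_eq, Finset.card_filter, Fin.sum_univ_castSucc,
    Fin.snoc_castSucc, Fin.snoc_last, hy.not_ge, if_false, add_zero]

theorem eventually_mem_oddUnion_snoc_iff (z : Fin n → ℝ) (y : ℝ) :
    ∀ᶠ t in atTop, y ∈ oddUnion (Fin.snoc z t : Fin (n + 1) → ℝ) ↔ y ∈ oddUnion z :=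
  (eventually_gt_atTop y).mono fun _ => mem_oddUnion_snoc_iff_of_lt z

theorem tendsto_A11_snoc {φ : ℝ → ℝ} (hφ : Integrable φ) (z : Fin n → ℝ) :
    Tendsto (fun t : ℝ => A11 φ (Fin.snoc z t : Fin (n + 1) → ℝ)) atTop (nhds (A11 φ z)) :=
  tendsto_setIntegral_of_ae_eventually_mem_iff hφ (fun _ => measurableSet_oddUnion _)
    (measurableSet_oddUnion z) (ae_of_all _ (eventually_mem_oddUnion_snoc_iff z))

theorem tendsto_A22_snoc {φ : ℝ → ℝ} (hφ : Integrable φ) (z : Fin n → ℝ) :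
    Tendsto (fun t : ℝ => A22 φ (Fin.snoc z t : Fin (n + 1) → ℝ)) atTop (nhds (A22 φ z)) :=
  tendsto_setIntegral_of_ae_eventually_mem_iff hφ (fun _ => (measurableSet_oddUnion _).compl)
    (measurableSet_oddUnion z).compl
    (ae_of_all _ fun y => (eventually_mem_oddUnion_snoc_iff z y).mono fun _ => not_congr)

end OddUnion

theorem stmt_2_general (p0 p1 : ℝ) {φ0 φ1 : ℝ → ℝ} (hi0 : Integrable φ0) (hi1 : Integrable φ1)
    {n : ℕ} (z : Fin n → ℝ) :
    Tendsto (fun t : ℝ => MI p0 p1 φ0 φ1 (Fin.snoc z t : Fin (n + 1) → ℝ)) atTop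
      (nhds (MI p0 p1 φ0 φ1 z)) := by
  have hA11 := tendsto_A11_snoc hi0 z
  have hA22 := tendsto_A22_snoc hi1 z
  have hq0 : Tendsto (fun t : ℝ => q0 p0 p1 φ0 φ1 (Fin.snoc z t : Fin (n + 1) → ℝ)) atTop
      (nhds (q0 p0 p1 φ0 φ1 z)) :=
    (hA11.const_mul p0).add ((hA22.const_sub 1).const_mul p1)
  have tendsto_Hb {u : ℝ → ℝ} {a : ℝ} (hu : Tendsto u atTop (nhds a)) :
      Tendsto (fun t => Hb (u t)) atTop (nhds (Hb a)) :=
    (continuous_Hb.tendsto a).comp hu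
  exact ((tendsto_Hb hq0).sub ((tendsto_Hb hA11).const_mul p0)).sub
    ((tendsto_Hb hA22).const_mul p1)

/-- for `m = n + 2 ≥ 2` and a strictly ordered `(m-1)`-vector `z`,
appending a final threshold `t` and letting `t → ∞`, the `m`-threshold mutual
information converges to the `(m-1)`-threshold one. -/
theorem stmt_2
    (p0 p1 : ℝ) (hp0 : p0 ∈ Set.Ioo (0:ℝ) 1) (hp1 : p1 ∈ Set.Ioo (0:ℝ) 1)
    (hp : p0 + p1 = 1)
    (φ0 φ1 : ℝ → ℝ) (hφ0 : ∀ y, 0 ≤ φ0 y) (hφ1 : ∀ y, 0 ≤ φ1 y)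
    (hi0 : Integrable φ0) (hi1 : Integrable φ1)
    (hI0 : ∫ y, φ0 y = 1) (hI1 : ∫ y, φ1 y = 1)
    (n : ℕ) (z : Fin (n + 1) → ℝ) (hmono : StrictMono z) :
    Filter.Tendsto (fun t : ℝ => MI p0 p1 φ0 φ1 (Fin.snoc z t : Fin (n + 2) → ℝ))
      Filter.atTop (nhds (MI p0 p1 φ0 φ1 z)) :=
  stmt_2_general p0 p1 hi0 hi1 z
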